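/- For every integer r ≥ 0 and every ρ ∈ (0, 1] there exists a constant C > 0, depending only on r and ρ, such that for every triangle K ⊂ ℝ² with diameter h whose inradius is at least ρh, every subset S ⊂ K with one-dimensional Hausdorff measure μH¹(S) ≤ h, and every polynomial p of degree at most r on ℝ², one has ∫_S p² dμH¹ ≤ C h^{−1} ∫_K p² dx. -/

import Mathlib

open MeasureTheory Set
open scoped RealInnerProductSpace

noncomputable section

/-- Points of the plane. -/
abbrev Pt2 := EuclideanSpace ℝ (Fin 2)

/-!
All norms on the finite-dimensional space of polynomials of degree at most `r` are equivalent, so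
the supremum over a large ball is controlled by the `L^q` norm over a small one. Transporting this
along `y ↦ z + h • y`, which does not raise the degree and multiplies volumes by `h ^ d`, bounds
`|p| ^ q` on `K` by `C * h ^ (-d) * ∫_K |p| ^ q`. Integrating this constant over `S` costs a factor
`μ S`, which is at most `h` in the theorem, where `d = 2`.
-/

open Metric Module Bornology
open MvPolynomial (eval)
open scoped ENNReal Pointwise Topology

theorem exists_norm_le_mul_norm_of_injective {𝕜 V E F : Type*} [NontriviallyNormedField 𝕜]
    [CompleteSpace 𝕜] [AddCommGroup V] [Module 𝕜 V] [FiniteDimensional 𝕜 V]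
    [NormedAddCommGroup E] [NormedSpace 𝕜 E] [SeminormedAddCommGroup F] [NormedSpace 𝕜 F]
    (f : V →ₗ[𝕜] E) (g : V →ₗ[𝕜] F) (hf : Function.Injective f) :
    ∃ C : ℝ, 0 < C ∧ ∀ v, ‖g v‖ ≤ C * ‖f v‖ := by
  let e := LinearEquiv.ofInjective f hf
  let A := (g ∘ₗ e.symm.toLinearMap).toContinuousLinearMap
  obtain ⟨C, hC, hA⟩ := A.bound
  exact ⟨C, hC, fun v ↦ by simpa [A, e] using hA (e v)⟩

section ContinuousMap

variable {X E : Type*} [TopologicalSpace X] [MeasurableSpace X] [OpensMeasurableSpace X]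
  [NormedAddCommGroup E] [SecondCountableTopologyEither X E] {μ : Measure X}
  [IsFiniteMeasureOnCompacts μ] {K U : Set X}

theorem memLp_restrict_of_subset_isCompact (f : C(X, E)) (hK : IsCompact K)
    (hU : MeasurableSet U) (hUK : U ⊆ K) (q : ℝ≥0∞) : MemLp f q (μ.restrict U) := by
  have : IsFiniteMeasure (μ.restrict U) :=
    isFiniteMeasure_restrict.2 ((measure_mono hUK).trans_lt hK.measure_lt_top).ne
  obtain ⟨M, hM⟩ := hK.exists_bound_of_continuousOn f.continuous.continuousOn
  exact .of_bound f.continuous.aestronglyMeasurable M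
    (ae_restrict_of_forall_mem hU fun x hx ↦ hM x (hUK hx))

variable [NormedSpace ℝ E] [μ.IsOpenPosMeasure] {V : Type*} [AddCommGroup V] [Module ℝ V]
  [FiniteDimensional ℝ V]

theorem exists_norm_le_mul_eLpNorm_restrict (T : V →ₗ[ℝ] C(X, E)) (hK : IsCompact K)
    (hU : IsOpen U) (hUK : U ⊆ K) (hT : ∀ v, EqOn (T v) 0 U → v = 0) {q : ℝ≥0∞} (hq : 1 ≤ q) :
    ∃ C : ℝ, 0 < C ∧ ∀ v, ∀ x ∈ K, ‖T v x‖ ≤ C * (eLpNorm (T v) q (μ.restrict U)).toReal := by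
  have : Fact (1 ≤ q) := ⟨hq⟩
  have : CompactSpace K := isCompact_iff_compactSpace.1 hK
  have hLp v := memLp_restrict_of_subset_isCompact (μ := μ) (T v) hK hU.measurableSet hUK q
  let toLp : V →ₗ[ℝ] Lp E q (μ.restrict U) :=
    { toFun v := (hLp v).toLp
      map_add' v w := by simp only [map_add]; rfl
      map_smul' c v := by simp only [map_smul]; rfl }
  let restrictK : V →ₗ[ℝ] C(K, E) :=
    { toFun v := (T v).restrict K
      map_add' v w := by simp only [map_add]; rfl
      map_smul' c v := by simp only [map_smul]; rfl }
  have htoLp : Function.Injective toLp := (injective_iff_map_eq_zero toLp).2 fun v hv ↦ by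
    have hae : T v =ᵐ[μ.restrict U] 0 :=
      (hLp v).coeFn_toLp.symm.trans (Lp.eq_zero_iff_ae_eq_zero.1 hv)
    exact hT v (Measure.eqOn_open_of_ae_eq hae hU (T v).continuous.continuousOn continuousOn_const)
  obtain ⟨C, hC, hbound⟩ := exists_norm_le_mul_norm_of_injective toLp restrictK htoLp
  refine ⟨C, hC, fun v x hx ↦ ?_⟩
  calc ‖T v x‖ ≤ ‖restrictK v‖ := (restrictK v).norm_coe_le_norm ⟨x, hx⟩
    _ ≤ C * ‖toLp v‖ := hbound v
    _ = C * (eLpNorm (T v) q (μ.restrict U)).toReal := by rw [← Lp.norm_toLp _ (hLp v)]; rfl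

theorem exists_norm_rpow_le_mul_setIntegral_norm_rpow (T : V →ₗ[ℝ] C(X, E)) (hK : IsCompact K)
    (hU : IsOpen U) (hUK : U ⊆ K) (hT : ∀ v, EqOn (T v) 0 U → v = 0) {q : ℝ} (hq : 1 ≤ q) :
    ∃ C : ℝ, 0 < C ∧ ∀ v, ∀ x ∈ K, ‖T v x‖ ^ q ≤ C * ∫ y in U, ‖T v y‖ ^ q ∂μ := by
  have hq0 : 0 < q := zero_lt_one.trans_le hq
  obtain ⟨C, hC, hbound⟩ := exists_norm_le_mul_eLpNorm_restrict (μ := μ) T hK hU hUK hT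
    (ENNReal.one_le_ofReal.2 hq)
  refine ⟨C ^ q, by positivity, fun v x hx ↦ ?_⟩
  have hI : 0 ≤ ∫ y in U, ‖T v y‖ ^ q ∂μ := by positivity
  have hnorm : (eLpNorm (T v) (.ofReal q) (μ.restrict U)).toReal =
      (∫ y in U, ‖T v y‖ ^ q ∂μ) ^ q⁻¹ := by
    have hLp := memLp_restrict_of_subset_isCompact (μ := μ) (T v) hK hU.measurableSet hUK
    rw [(hLp _).eLpNorm_eq_integral_rpow_norm (by simpa using hq0) ENNReal.ofReal_ne_top,
      ENNReal.toReal_ofReal hq0.le, ENNReal.toReal_ofReal (by positivity)]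
  calc ‖T v x‖ ^ q ≤ (C * (∫ y in U, ‖T v y‖ ^ q ∂μ) ^ q⁻¹) ^ q := by
        gcongr
        exact hnorm ▸ hbound v x hx
    _ = C ^ q * ∫ y in U, ‖T v y‖ ^ q ∂μ := by
        rw [Real.mul_rpow hC.le (by positivity), Real.rpow_inv_rpow hI hq0.ne']

end ContinuousMap

section Polynomial

theorem totalDegree_bind₁_le {R σ τ : Type*} [CommSemiring R] (p : MvPolynomial σ R)
    {g : σ → MvPolynomial τ R} {d : ℕ} (hg : ∀ i, (g i).totalDegree ≤ d) :
    (MvPolynomial.bind₁ g p).totalDegree ≤ p.totalDegree * d := by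
  rw [MvPolynomial.bind₁, MvPolynomial.aeval_def, MvPolynomial.eval₂_eq]
  refine MvPolynomial.totalDegree_finsetSum_le fun m hm ↦ ?_
  calc (_ * ∏ i ∈ m.support, g i ^ m i).totalDegree
      ≤ (∏ i ∈ m.support, g i ^ m i).totalDegree := by
        refine (MvPolynomial.totalDegree_mul _ _).trans ?_
        simp [MvPolynomial.algebraMap_eq]
    _ ≤ ∑ i ∈ m.support, m i * d := by
        refine (MvPolynomial.totalDegree_finsetProd _ _).trans (Finset.sum_le_sum fun i _ ↦ ?_)
        exact (MvPolynomial.totalDegree_pow _ _).trans (Nat.mul_le_mul_left _ (hg i))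
    _ = (m.sum fun _ n ↦ n) * d := (Finset.sum_mul _ _ _).symm
    _ ≤ p.totalDegree * d := Nat.mul_le_mul_right _ (MvPolynomial.le_totalDegree hm)

theorem exists_totalDegree_le_eval_eq_eval_add_smul {R σ : Type*} [CommSemiring R]
    (p : MvPolynomial σ R) (z : σ → R) (a : R) :
    ∃ p' : MvPolynomial σ R, p'.totalDegree ≤ p.totalDegree ∧
      ∀ y, eval y p' = eval (z + a • y) p := by
  let g i : MvPolynomial σ R := MvPolynomial.C (z i) + MvPolynomial.C a * MvPolynomial.X i
  have hg i : (g i).totalDegree ≤ 1 := by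
    refine (MvPolynomial.totalDegree_add _ _).trans (max_le (by simp) ?_)
    rw [MvPolynomial.C_mul_X_eq_monomial]
    exact (MvPolynomial.totalDegree_monomial_le _ _).trans (by simp)
  refine ⟨MvPolynomial.bind₁ g p, by simpa using totalDegree_bind₁_le p hg, fun y ↦ ?_⟩
  rw [MvPolynomial.eval, MvPolynomial.eval₂Hom_bind₁]
  congr 2
  ext i
  simp [g]

theorem eq_zero_of_forall_mem_isOpen_eval_eq_zero {R σ : Type*} [Finite σ] [CommRing R]
    [IsDomain R] [TopologicalSpace R] [T1Space R] [∀ x : R, (𝓝[≠] x).NeBot]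
    {p : MvPolynomial σ R} {U : Set (σ → R)} (hU : IsOpen U) (hne : U.Nonempty)
    (hp : ∀ x ∈ U, eval x p = 0) : p = 0 := by
  obtain ⟨x, hx⟩ := hne
  obtain ⟨t, ht, htU⟩ := isOpen_pi_iff'.1 hU x hx
  refine MvPolynomial.funext_set t
    (fun i ↦ infinite_of_mem_nhds (x i) ((ht i).1.mem_nhds (ht i).2)) fun y hy ↦ ?_
  simpa using hp y (htU hy)

end Polynomial

theorem setIntegral_ball_comp_add_smul {E F : Type*} [NormedAddCommGroup E] [NormedSpace ℝ E]
    [FiniteDimensional ℝ E] [MeasurableSpace E] [BorelSpace E] [NormedAddCommGroup F]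
    [NormedSpace ℝ F] (μ : Measure E) [μ.IsAddHaarMeasure] (f : E → F) (z : E) {h : ℝ}
    (hh : 0 < h) (δ : ℝ) :
    ∫ y in ball 0 δ, f (z + h • y) ∂μ =
      (h ^ finrank ℝ E)⁻¹ • ∫ x in ball z (δ * h), f x ∂μ := by
  have hball : h • ball (0 : E) δ = (z + ·) ⁻¹' ball z (δ * h) := by
    simp [_root_.smul_ball hh.ne', abs_of_pos hh, mul_comm]
  rw [Measure.setIntegral_comp_smul_of_pos μ (fun x ↦ f (z + x)) _ hh, hball,
    (measurePreserving_add_left μ z).setIntegral_preimage_emb (measurableEmbedding_addLeft z)]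

section InverseInequality

variable {ι : Type*}

/-- The linear map sending a polynomial to the function it defines on Euclidean space. -/
def polynomialFunction (ι : Type*) :
    MvPolynomial ι ℝ →ₗ[ℝ] C(EuclideanSpace ℝ ι, ℝ) where
  toFun p := ⟨fun x ↦ eval x.ofLp p, p.continuous_eval.comp (PiLp.continuous_ofLp 2 _)⟩
  map_add' _ _ := by ext; simp
  map_smul' _ _ := by ext; simp [MvPolynomial.smul_eval]

theorem eq_zero_of_eqOn_polynomialFunction_zero [Finite ι] {p : MvPolynomial ι ℝ}
    {U : Set (EuclideanSpace ℝ ι)} (hU : IsOpen U) (hne : U.Nonempty)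
    (hp : EqOn (polynomialFunction ι p) 0 U) : p = 0 :=
  eq_zero_of_forall_mem_isOpen_eval_eq_zero (hU.preimage (PiLp.continuous_toLp 2 _))
    (hne.preimage (WithLp.toLp_surjective 2)) fun _ hx ↦ hp hx

theorem exists_abs_eval_rpow_le_mul_setIntegral [Fintype ι] (r : ℕ) {q : ℝ} (hq : 1 ≤ q)
    {K U : Set (EuclideanSpace ℝ ι)} (hK : IsCompact K) (hU : IsOpen U) (hne : U.Nonempty)
    (hUK : U ⊆ K) :
    ∃ C : ℝ, 0 < C ∧ ∀ p : MvPolynomial ι ℝ, p.totalDegree ≤ r → ∀ x ∈ K,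
      |eval x.ofLp p| ^ q ≤ C * ∫ y in U, |eval y.ofLp p| ^ q := by
  obtain ⟨C, hC, hbound⟩ := exists_norm_rpow_le_mul_setIntegral_norm_rpow (μ := volume)
    (polynomialFunction ι ∘ₗ (MvPolynomial.restrictTotalDegree ι ℝ r).subtype) hK hU hUK
    (fun p hp ↦ Subtype.ext (eq_zero_of_eqOn_polynomialFunction_zero hU hne hp)) hq
  exact ⟨C, hC, fun p hp ↦ hbound ⟨p, (MvPolynomial.mem_restrictTotalDegree ..).2 hp⟩⟩

theorem exists_abs_eval_rpow_le_mul_setIntegral_ball (ι : Type*) [Fintype ι] (r : ℕ) {q ρ : ℝ}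
    (hq : 1 ≤ q) (hρ : 0 < ρ) :
    ∃ C : ℝ, 0 < C ∧ ∀ (z : EuclideanSpace ℝ ι) (h : ℝ), 0 < h →
      ∀ p : MvPolynomial ι ℝ, p.totalDegree ≤ r → ∀ x ∈ closedBall z h,
        |eval x.ofLp p| ^ q ≤
          C * (h ^ Fintype.card ι)⁻¹ *
            ∫ y in ball z (ρ * h), |eval y.ofLp p| ^ q := by
  obtain ⟨C, hC, hbound⟩ := exists_abs_eval_rpow_le_mul_setIntegral (ι := ι) r hq
    (isCompact_closedBall 0 (max ρ 1)) isOpen_ball (nonempty_ball.2 hρ)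
    (ball_subset_closedBall.trans (closedBall_subset_closedBall (le_max_left ρ 1)))
  refine ⟨C, hC, fun z h hh p hp x hx ↦ ?_⟩
  obtain ⟨p', hp', heval⟩ := exists_totalDegree_le_eval_eq_eval_add_smul p z.ofLp h
  have hx' : h⁻¹ • (x - z) ∈ closedBall 0 (max ρ 1) := by
    rw [mem_closedBall_zero_iff, norm_smul, norm_inv, Real.norm_of_nonneg hh.le, ← dist_eq_norm]
    exact ((inv_mul_le_one₀ hh).2 hx).trans (le_max_right ρ 1)
  have hxz : z + h • h⁻¹ • (x - z) = x := by rw [smul_inv_smul₀ hh.ne', add_sub_cancel]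
  calc |eval x.ofLp p| ^ q
      = |eval (h⁻¹ • (x - z)).ofLp p'| ^ q := by
        rw [heval, ← WithLp.ofLp_smul, ← WithLp.ofLp_add, hxz]
    _ ≤ C * ∫ y in ball (0 : EuclideanSpace ℝ ι) ρ, |eval y.ofLp p'| ^ q :=
        hbound p' (hp'.trans hp) _ hx'
    _ = C * ∫ y in ball (0 : EuclideanSpace ℝ ι) ρ, |eval (z + h • y).ofLp p| ^ q := by
        simp only [heval, WithLp.ofLp_add, WithLp.ofLp_smul]
    _ = C * (h ^ Fintype.card ι)⁻¹ * ∫ y in ball z (ρ * h), |eval y.ofLp p| ^ q := by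
        rw [setIntegral_ball_comp_add_smul volume
          (fun y : EuclideanSpace ℝ ι ↦ |eval y.ofLp p| ^ q) z hh,
          finrank_euclideanSpace, smul_eq_mul, mul_assoc]

end InverseInequality

theorem discrete_trace_inequality_on_cut_triangles_general (ι : Type*) [Fintype ι] (r : ℕ)
    {q ρ : ℝ} (hq : 1 ≤ q) (hρ : 0 < ρ) :
    ∃ C : ℝ, 0 < C ∧
      ∀ (K : Set (EuclideanSpace ℝ ι)), K.Nontrivial → IsBounded K →
        (∃ z, ball z (ρ * diam K) ⊆ K) →
        ∀ (μ : Measure (EuclideanSpace ℝ ι)) (S : Set (EuclideanSpace ℝ ι)), S ⊆ K → μ S ≠ ∞ →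
        ∀ p : MvPolynomial ι ℝ, p.totalDegree ≤ r →
          ∫ x in S, |eval x.ofLp p| ^ q ∂μ ≤
            C * (diam K ^ Fintype.card ι)⁻¹ * μ.real S *
              ∫ x in K, |eval x.ofLp p| ^ q := by
  obtain ⟨C, hC, hbound⟩ := exists_abs_eval_rpow_le_mul_setIntegral_ball ι r hq hρ
  refine ⟨C, hC, fun K hKnt hKb ⟨z, hz⟩ μ S hSK hS p hp ↦ ?_⟩
  have hdiam : 0 < diam K := diam_pos hKnt hKb
  have hzK : z ∈ K := hz (mem_ball_self (by positivity))
  set f : EuclideanSpace ℝ ι → ℝ := fun x ↦ |eval x.ofLp p| ^ q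
  have hf0 x : 0 ≤ f x := by positivity
  have hfK : IntegrableOn f K :=
    (((polynomialFunction ι p).continuous.abs.rpow_const fun _ ↦ .inr (by linarith)).continuousOn
      |>.integrableOn_compact hKb.isCompact_closure).mono_set subset_closure
  have hle : ∀ x ∈ K, f x ≤ C * (diam K ^ Fintype.card ι)⁻¹ * ∫ y in K, f y := fun x hx ↦
    calc f x ≤ C * (diam K ^ Fintype.card ι)⁻¹ * ∫ y in ball z (ρ * diam K), f y :=
          hbound z _ hdiam p hp x (dist_le_diam_of_mem hKb hx hzK)
      _ ≤ C * (diam K ^ Fintype.card ι)⁻¹ * ∫ y in K, f y :=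
          mul_le_mul_of_nonneg_left
            (setIntegral_mono_set hfK (.of_forall hf0) hz.eventuallyLE) (by positivity)
  calc ∫ x in S, f x ∂μ
      ≤ C * (diam K ^ Fintype.card ι)⁻¹ * (∫ y in K, f y) * μ.real S :=
        (Real.le_norm_self _).trans <| norm_setIntegral_le_of_norm_le_const hS.lt_top fun x hx ↦ by
          simpa only [Real.norm_of_nonneg (hf0 x)] using hle x (hSK hx)
    _ = C * (diam K ^ Fintype.card ι)⁻¹ * μ.real S * ∫ x in K, f x := by ring

/-- **Discrete trace inequality on cut triangles** (second estimate of Lemma 3.1).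
For every degree `r` and shape-regularity parameter `ρ ∈ (0,1]` there is a constant
`C > 0`, depending only on `r` and `ρ`, such that for every triangle `K ⊆ ℝ²` of
diameter `h` with inradius at least `ρ h`, every subset `S ⊆ K` of one-dimensional
Hausdorff measure at most `h`, and every polynomial `p` of degree at most `r`,
`∫_S p² dμH¹ ≤ C h⁻¹ ∫_K p² dx`. -/
theorem discrete_trace_inequality_on_cut_triangles
    (r : ℕ) (ρ : ℝ) (hρ0 : 0 < ρ) (hρ1 : ρ ≤ 1) :
    ∃ C : ℝ, 0 < C ∧
      ∀ (K : Set Pt2) (vtx : Fin 3 → Pt2) (h : ℝ),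
        AffineIndependent ℝ vtx → K = convexHull ℝ (Set.range vtx) →
        h = Metric.diam K →
        (∃ z : Pt2, Metric.ball z (ρ * h) ⊆ K) →
        ∀ S : Set Pt2, S ⊆ K →
          Measure.hausdorffMeasure (1 : ℝ) S ≤ ENNReal.ofReal h →
        ∀ p : MvPolynomial (Fin 2) ℝ, p.totalDegree ≤ r →
          (∫ x in S, (MvPolynomial.eval (fun j => x j) p) ^ 2
              ∂(Measure.hausdorffMeasure (1 : ℝ)))
            ≤ C * h⁻¹ * ∫ x in K, (MvPolynomial.eval (fun j => x j) p) ^ 2 := by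
  obtain ⟨C, hC, htrace⟩ :=
    discrete_trace_inequality_on_cut_triangles_general (Fin 2) r one_le_two hρ0
  refine ⟨C, hC, fun K vtx h hvtx hK hh hball S hSK hS p hp ↦ ?_⟩
  have hKnt : K.Nontrivial :=
    hK ▸ (image_univ ▸ nontrivial_univ.image hvtx.injective).mono (subset_convexHull ℝ _)
  have hKb : IsBounded K := hK ▸ isBounded_convexHull.2 (finite_range vtx).isBounded
  have hh0 : 0 < h := hh ▸ diam_pos hKnt hKb
  have hSh : (Measure.hausdorffMeasure 1).real S ≤ h := ENNReal.toReal_le_of_le_ofReal hh0.le hS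
  calc ∫ x in S, (MvPolynomial.eval (fun j => x j) p) ^ 2 ∂(Measure.hausdorffMeasure (1 : ℝ))
      ≤ C * (h ^ 2)⁻¹ * (Measure.hausdorffMeasure 1).real S *
          ∫ x in K, (MvPolynomial.eval (fun j => x j) p) ^ 2 := by
        simpa [← hh] using htrace K hKnt hKb (hh ▸ hball) _ S hSK
          (hS.trans_lt ENNReal.ofReal_lt_top).ne p hp
    _ ≤ C * (h ^ 2)⁻¹ * h * ∫ x in K, (MvPolynomial.eval (fun j => x j) p) ^ 2 := by
        gcongr
    _ = C * h⁻¹ * ∫ x in K, (MvPolynomial.eval (fun j => x j) p) ^ 2 := by field_simp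

end
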